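/- A triangle state ψ = ψ_{A_R B_L} ⊗ ψ_{B_R C_L} ⊗ ψ_{C_R A_L} satisfies g(A:B) = 0, i.e., there exists a purification of ρ_AB = Tr_C |ψ⟩⟨ψ| to an auxiliary system C_L ⊗ C_R such that 2 S(AC_L) = I(A:B); specifically, taking C_L = C_L (containing ψ_{B_R C_L}'s C-part) and C_R as the rest gives S(AC_L) = S(A_R) + S(B_R) = (1/2) I(A:B). -/

import Mathlib

open scoped Classical ComplexOrder

/-- von Neumann entropy of a (Hermitian) matrix, via its spectrum. -/
noncomputable def vnEntropy {n : Type*} [Fintype n] [DecidableEq n]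
    (ρ : Matrix n n ℂ) : ℝ :=
  if h : ρ.IsHermitian then -∑ i, h.eigenvalues i * Real.log (h.eigenvalues i) else 0

/-- Reduced density matrix of a bipartite pure state `ψ : α × β → ℂ` on `α`. -/
noncomputable def redDM {α β : Type*} [Fintype β] (ψ : α × β → ℂ) : Matrix α α ℂ :=
  Matrix.of fun a a' => ∑ b, ψ (a, b) * (starRingEnd ℂ) (ψ (a', b))

/-- Entanglement entropy of the subsystem `α` for the bipartite pure state `ψ`. -/
noncomputable def SE {α β : Type*} [Fintype α] [DecidableEq α] [Fintype β]
    (ψ : α × β → ℂ) : ℝ := vnEntropy (redDM ψ)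

section
variable {aL aR bL bR cL cR : ℕ}

/-- The triangle state `ψ = ψ₁_{A_R B_L} ⊗ ψ₂_{B_R C_L} ⊗ ψ₃_{C_R A_L}` on
`H_A ⊗ H_B ⊗ H_C` with `H_α = H_{α_L} ⊗ H_{α_R}`. -/
noncomputable def triangle (ψ₁ : Fin aR × Fin bL → ℂ) (ψ₂ : Fin bR × Fin cL → ℂ)
    (ψ₃ : Fin cR × Fin aL → ℂ) :
    (Fin aL × Fin aR) × (Fin bL × Fin bR) × (Fin cL × Fin cR) → ℂ :=
  fun p => ψ₁ (p.1.2, p.2.1.1) * ψ₂ (p.2.1.2, p.2.2.1) * ψ₃ (p.2.2.2, p.1.1)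

variable (ψ : (Fin aL × Fin aR) × (Fin bL × Fin bR) × (Fin cL × Fin cR) → ℂ)

/-- `S(A)`. -/
noncomputable def S_A : ℝ := SE ψ
/-- `S(A_L)`. -/
noncomputable def S_AL : ℝ :=
  SE (fun p : Fin aL × (Fin aR × (Fin bL × Fin bR) × (Fin cL × Fin cR)) =>
    ψ ((p.1, p.2.1), p.2.2))
/-- `S(A_R)`. -/
noncomputable def S_AR : ℝ :=
  SE (fun p : Fin aR × (Fin aL × (Fin bL × Fin bR) × (Fin cL × Fin cR)) =>
    ψ ((p.2.1, p.1), p.2.2))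
/-- `S(B)`. -/
noncomputable def S_B : ℝ :=
  SE (fun p : (Fin bL × Fin bR) × ((Fin aL × Fin aR) × (Fin cL × Fin cR)) =>
    ψ (p.2.1, p.1, p.2.2))
/-- `S(C)`. -/
noncomputable def S_C : ℝ :=
  SE (fun p : (Fin cL × Fin cR) × ((Fin aL × Fin aR) × (Fin bL × Fin bR)) =>
    ψ (p.2.1, p.2.2, p.1))
/-- `S(AB)`. -/
noncomputable def S_AB : ℝ :=
  SE (fun p : ((Fin aL × Fin aR) × (Fin bL × Fin bR)) × (Fin cL × Fin cR) =>
    ψ (p.1.1, p.1.2, p.2))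
/-- `S(AC)`. -/
noncomputable def S_AC : ℝ :=
  SE (fun p : ((Fin aL × Fin aR) × (Fin cL × Fin cR)) × (Fin bL × Fin bR) =>
    ψ (p.1.1, p.2, p.1.2))

end

section helpers

open Polynomial Matrix

/-- Entropy of a polynomial, summing over its roots. -/
noncomputable def entPoly (p : ℂ[X]) : ℝ :=
  (p.roots.map (fun z => -(z.re * Real.log z.re))).sum

theorem entPoly_X_pow_mul (k : ℕ) (p : ℂ[X]) (hp : p ≠ 0) :
    entPoly (X ^ k * p) = entPoly p := by
  unfold entPoly
  rw [Polynomial.roots_mul (mul_ne_zero (pow_ne_zero _ X_ne_zero) hp)]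
  simp [Multiset.map_nsmul, Multiset.sum_nsmul]

theorem vnEntropy_eq_entPoly {n : Type*} [Fintype n] [DecidableEq n]
    (ρ : Matrix n n ℂ) (h : ρ.IsHermitian) : vnEntropy ρ = entPoly ρ.charpoly := by
  unfold vnEntropy entPoly
  rw [dif_pos h, h.roots_charpoly_eq_eigenvalues, Multiset.map_map]
  simp

theorem entPoly_prod {n : Type*} [Fintype n] (d : n → ℝ) :
    entPoly (∏ i, (X - C ((d i : ℝ) : ℂ))) = ∑ i, -(d i * Real.log (d i)) := by
  unfold entPoly
  rw [Polynomial.roots_prod]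
  · simp
  · simp [Finset.prod_ne_zero_iff, Polynomial.X_sub_C_ne_zero]

theorem redDM_eq {α β : Type*} [Fintype β] (ψ : α × β → ℂ) :
    redDM ψ = (Matrix.of fun a b => ψ (a, b)) * (Matrix.of fun a b => ψ (a, b))ᴴ := by
  ext a a'
  simp [redDM, Matrix.mul_apply]

theorem redDM_herm {α β : Type*} [Fintype β] (ψ : α × β → ℂ) : (redDM ψ).IsHermitian := by
  rw [redDM_eq]; exact Matrix.isHermitian_mul_conjTranspose_self _

theorem SE_eq {α β : Type*} [Fintype α] [DecidableEq α] [Fintype β] (ψ : α × β → ℂ) :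
    SE ψ = entPoly (redDM ψ).charpoly :=
  vnEntropy_eq_entPoly _ (redDM_herm ψ)

theorem SE_swap {α β : Type*} [Fintype α] [DecidableEq α] [Fintype β] [DecidableEq β]
    (ψ : α × β → ℂ) : SE (fun p : β × α => ψ (p.2, p.1)) = SE ψ := by
  set M : Matrix α β ℂ := Matrix.of fun a b => ψ (a, b) with hM
  have e1 : redDM (fun p : β × α => ψ (p.2, p.1)) = (Mᴴ * M)ᵀ := by
    ext b b'
    simp [redDM, Matrix.mul_apply, hM, mul_comm]
  rw [SE_eq, SE_eq, e1, Matrix.charpoly_transpose, redDM_eq, ← hM]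
  have h := Matrix.charpoly_mul_comm' M Mᴴ
  rw [← entPoly_X_pow_mul (Fintype.card α) _ (Matrix.charpoly_monic _).ne_zero, ← h,
    entPoly_X_pow_mul _ _ (Matrix.charpoly_monic _).ne_zero]

theorem SE_equiv {α β α' β' : Type*} [Fintype α] [DecidableEq α] [Fintype β]
    [Fintype α'] [DecidableEq α'] [Fintype β'] (e : α ≃ α') (f : β ≃ β')
    (ψ : α' × β' → ℂ) : SE (fun p : α × β => ψ (e p.1, f p.2)) = SE ψ := by
  rw [SE_eq, SE_eq, ← Matrix.charpoly_reindex e]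
  congr 2
  ext a a'
  simp only [redDM, Matrix.reindex_apply, Matrix.submatrix_apply, Matrix.of_apply,
    Equiv.apply_symm_apply]
  exact Equiv.sum_comp f (fun b => ψ (a, b) * (starRingEnd ℂ) (ψ (a', b)))

theorem trace_redDM {α β : Type*} [Fintype α] [Fintype β] (ψ : α × β → ℂ) :
    (redDM ψ).trace = ((∑ x, Complex.normSq (ψ x) : ℝ) : ℂ) := by
  simp [Matrix.trace, redDM, Fintype.sum_prod_type, Complex.mul_conj]

theorem SE_pure {β : Type*} [Fintype β] (ψ : Unit × β → ℂ)
    (h : ∑ x, Complex.normSq (ψ x) = 1) : SE ψ = 0 := by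
  have e : redDM ψ = 1 := by
    have := trace_redDM ψ
    rw [h] at this
    ext i j
    simpa [Matrix.trace] using this
  rw [SE_eq, e]
  have h1 : (1 : Matrix Unit Unit ℂ).charpoly = ∏ i : Unit, (X - C (((1 : ℝ)) : ℂ)) := by
    simp [Matrix.charpoly_one]
  rw [h1, entPoly_prod]
  simp

theorem vnEntropy_kron {m n : Type*} [Fintype m] [DecidableEq m] [Fintype n] [DecidableEq n]
    (A : Matrix m m ℂ) (B : Matrix n n ℂ) (hA : A.IsHermitian) (hB : B.IsHermitian)
    (tA : A.trace = 1) (tB : B.trace = 1) :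
    entPoly (Matrix.kronecker A B).charpoly = entPoly A.charpoly + entPoly B.charpoly := by
  have hc : (Matrix.kronecker A B).charpoly =
      ∏ p : m × n, (X - C (((hA.eigenvalues p.1 * hB.eigenvalues p.2 : ℝ)) : ℂ)) := by
    have sA := hA.spectral_theorem
    have sB := hB.spectral_theorem
    rw [Unitary.conjStarAlgAut_apply] at sA sB
    have uA : star (hA.eigenvectorUnitary : Matrix m m ℂ) * hA.eigenvectorUnitary = 1 := by simp
    have uB : star (hB.eigenvectorUnitary : Matrix n n ℂ) * hB.eigenvectorUnitary = 1 := by simp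
    conv_lhs => rw [sA, sB]
    simp only [Matrix.kronecker]
    rw [Matrix.mul_kronecker_mul, Matrix.charpoly_mul_comm, ← Matrix.mul_kronecker_mul,
      ← mul_assoc, ← mul_assoc]
    erw [uA, uB]
    rw [one_mul, one_mul, Matrix.diagonal_kronecker_diagonal, Matrix.charpoly_diagonal]
    simp
  rw [hc, hA.charpoly_eq, hB.charpoly_eq, entPoly_prod]
  erw [entPoly_prod, entPoly_prod]
  have sA : ∑ i, hA.eigenvalues i = 1 := by
    have := hA.trace_eq_sum_eigenvalues
    rw [tA] at this
    have h2 := congrArg Complex.re this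
    simpa using h2.symm
  have sB : ∑ i, hB.eigenvalues i = 1 := by
    have := hB.trace_eq_sum_eigenvalues
    rw [tB] at this
    have h2 := congrArg Complex.re this
    simpa using h2.symm
  have key : ∀ a b : ℝ, -(a * b * Real.log (a * b)) =
      -(a * Real.log a) * b + a * -(b * Real.log b) := by
    intro a b
    by_cases ha : a = 0
    · simp [ha]
    by_cases hb : b = 0
    · simp [hb]
    rw [Real.log_mul ha hb]; ring
  simp only [key, Finset.sum_add_distrib, Fintype.sum_prod_type]
  rw [← Finset.sum_mul_sum, ← Finset.sum_mul_sum, sA, sB]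
  simp

/-- Additivity of entanglement entropy on product states. -/
theorem SE_prod {α β α' β' : Type*} [Fintype α] [DecidableEq α] [Fintype β]
    [Fintype α'] [DecidableEq α'] [Fintype β'] (ψ : α × β → ℂ) (χ : α' × β' → ℂ)
    (h : ∑ x, Complex.normSq (ψ x) = 1) (h' : ∑ x, Complex.normSq (χ x) = 1) :
    SE (fun p : (α × α') × (β × β') => ψ (p.1.1, p.2.1) * χ (p.1.2, p.2.2)) =
      SE ψ + SE χ := by
  rw [SE_eq, SE_eq, SE_eq, ← vnEntropy_kron _ _ (redDM_herm ψ) (redDM_herm χ)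
    (by rw [trace_redDM, h]; simp) (by rw [trace_redDM, h']; simp)]
  congr 2
  ext a a'
  simp only [redDM, Matrix.of_apply, Matrix.kronecker, Matrix.kroneckerMap_apply,
    Fintype.sum_prod_type, Finset.sum_mul_sum, map_mul]
  refine Finset.sum_congr rfl fun i _ => Finset.sum_congr rfl fun j _ => ?_
  ring

theorem normSq_prodState {α β α' β' : Type*} [Fintype α] [Fintype β]
    [Fintype α'] [Fintype β'] (ψ : α × β → ℂ) (χ : α' × β' → ℂ)
    (h : ∑ x, Complex.normSq (ψ x) = 1) (h' : ∑ x, Complex.normSq (χ x) = 1) :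
    ∑ p : (α × α') × (β × β'), Complex.normSq (ψ (p.1.1, p.2.1) * χ (p.1.2, p.2.2)) = 1 := by
  rw [← (Equiv.prodProdProdComm α β α' β').sum_comp]
  simp only [Complex.normSq_mul, Equiv.prodProdProdComm_apply]
  rw [Fintype.sum_prod_type]
  simp only [Prod.mk.eta]
  rw [← Finset.sum_mul_sum, h, h', one_mul]

theorem SE_prod3 {α₁ β₁ α₂ β₂ α₃ β₃ : Type*} [Fintype α₁] [DecidableEq α₁] [Fintype β₁]
    [Fintype α₂] [DecidableEq α₂] [Fintype β₂] [Fintype α₃] [DecidableEq α₃] [Fintype β₃]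
    {γ δ : Type*} [Fintype γ] [DecidableEq γ] [Fintype δ]
    (ψ₁ : α₁ × β₁ → ℂ) (ψ₂ : α₂ × β₂ → ℂ) (ψ₃ : α₃ × β₃ → ℂ)
    (h₁ : ∑ x, Complex.normSq (ψ₁ x) = 1) (h₂ : ∑ x, Complex.normSq (ψ₂ x) = 1)
    (h₃ : ∑ x, Complex.normSq (ψ₃ x) = 1)
    (e : γ ≃ (α₁ × α₂) × α₃) (f : δ ≃ (β₁ × β₂) × β₃) (Ψ : γ × δ → ℂ)
    (hΨ : ∀ c d, Ψ (c, d) = ψ₁ ((e c).1.1, (f d).1.1) * ψ₂ ((e c).1.2, (f d).1.2)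
      * ψ₃ ((e c).2, (f d).2)) :
    SE Ψ = SE ψ₁ + SE ψ₂ + SE ψ₃ := by
  rw [← SE_prod ψ₁ ψ₂ h₁ h₂, ← SE_prod _ ψ₃ (normSq_prodState ψ₁ ψ₂ h₁ h₂) h₃, ← SE_equiv e f]
  congr 1
  funext p
  exact hΨ p.1 p.2

theorem norm_swap {α β : Type*} [Fintype α] [Fintype β] (ψ : α × β → ℂ)
    (h : ∑ x, Complex.normSq (ψ x) = 1) :
    ∑ x : β × α, Complex.normSq (ψ (x.2, x.1)) = 1 := by
  rw [← h]
  exact (Equiv.prodComm β α).sum_comp (fun x => Complex.normSq (ψ x))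

theorem norm_unit {α : Type*} [Fintype α] (ψ : α → ℂ)
    (h : ∑ x, Complex.normSq (ψ x) = 1) :
    ∑ x : Unit × α, Complex.normSq (ψ x.2) = 1 := by
  rw [Fintype.sum_prod_type]; simpa using h

theorem norm_unit' {α : Type*} [Fintype α] (ψ : α → ℂ)
    (h : ∑ x, Complex.normSq (ψ x) = 1) :
    ∑ x : α × Unit, Complex.normSq (ψ x.1) = 1 := by
  rw [Fintype.sum_prod_type]; simpa using h

theorem SE_pure' {α : Type*} [Fintype α] [DecidableEq α] (ψ : α → ℂ)
    (h : ∑ x, Complex.normSq (ψ x) = 1) : SE (fun p : α × Unit => ψ p.1) = 0 := by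
  rw [← SE_swap]
  exact SE_pure _ (norm_unit ψ h)

end helpers

/-- A triangle state has `g(A:B) = 0`: there exists a purification
`φ` of `ρ_AB = Tr_C |ψ⟩⟨ψ|` to an auxiliary system `C_L ⊗ C_R` such that
`2 S(A C_L) = I(A:B)`, i.e. `S(A C_L) = ½ I(A:B)`. -/
theorem triangle_g_eq_zero (aL aR bL bR cL cR : ℕ)
    (ψ₁ : Fin aR × Fin bL → ℂ) (ψ₂ : Fin bR × Fin cL → ℂ) (ψ₃ : Fin cR × Fin aL → ℂ)
    (h₁ : ∑ x : Fin aR × Fin bL, Complex.normSq (ψ₁ x) = 1)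
    (h₂ : ∑ x : Fin bR × Fin cL, Complex.normSq (ψ₂ x) = 1)
    (h₃ : ∑ x : Fin cR × Fin aL, Complex.normSq (ψ₃ x) = 1) :
    ∃ (nL nR : ℕ)
      (φ : (Fin aL × Fin aR) × (Fin bL × Fin bR) × Fin nL × Fin nR → ℂ),
      (∀ p q : (Fin aL × Fin aR) × (Fin bL × Fin bR),
        (∑ l : Fin nL, ∑ r : Fin nR,
            φ (p.1, p.2, l, r) * (starRingEnd ℂ) (φ (q.1, q.2, l, r))) =
        ∑ c : Fin cL × Fin cR,
            triangle ψ₁ ψ₂ ψ₃ (p.1, p.2, c) *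
              (starRingEnd ℂ) (triangle ψ₁ ψ₂ ψ₃ (q.1, q.2, c))) ∧
      2 * SE (fun p : ((Fin aL × Fin aR) × Fin nL) × ((Fin bL × Fin bR) × Fin nR) =>
          φ (p.1.1, p.2.1, p.1.2, p.2.2)) =
        S_A (triangle ψ₁ ψ₂ ψ₃) + S_B (triangle ψ₁ ψ₂ ψ₃)
          - S_AB (triangle ψ₁ ψ₂ ψ₃) := by
  have pA : S_A (triangle ψ₁ ψ₂ ψ₃) = SE ψ₁ + SE ψ₃ := by
    have := SE_prod3 ψ₁ (fun p : Unit × (Fin bR × Fin cL) => ψ₂ p.2)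
      (fun p : Fin aL × Fin cR => ψ₃ (p.2, p.1)) h₁ (norm_unit _ h₂) (norm_swap _ h₃)
      (⟨fun x => ((x.2, ()), x.1), fun y => (y.2, y.1.1), fun _ => rfl, fun _ => rfl⟩ :
        Fin aL × Fin aR ≃ (Fin aR × Unit) × Fin aL)
      (⟨fun x => ((x.1.1, (x.1.2, x.2.1)), x.2.2),
        fun y => ((y.1.1, y.1.2.1), (y.1.2.2, y.2)), fun _ => rfl, fun _ => rfl⟩ :
        (Fin bL × Fin bR) × (Fin cL × Fin cR) ≃ (Fin bL × (Fin bR × Fin cL)) × Fin cR)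
      (triangle ψ₁ ψ₂ ψ₃) (fun _ _ => rfl)
    rw [S_A, this, SE_pure _ (norm_unit _ h₂), SE_swap ψ₃, add_zero]
  have pB : S_B (triangle ψ₁ ψ₂ ψ₃) = SE ψ₁ + SE ψ₂ := by
    unfold S_B
    have := SE_prod3 (fun p : Fin bL × Fin aR => ψ₁ (p.2, p.1)) ψ₂
      (fun p : Unit × (Fin cR × Fin aL) => ψ₃ p.2) (norm_swap _ h₁) h₂ (norm_unit _ h₃)
      (⟨fun x => ((x.1, x.2), ()), fun y => y.1, fun _ => rfl, fun _ => rfl⟩ :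
        Fin bL × Fin bR ≃ (Fin bL × Fin bR) × Unit)
      (⟨fun x => ((x.1.2, x.2.1), (x.2.2, x.1.1)),
        fun y => ((y.2.2, y.1.1), (y.1.2, y.2.1)), fun _ => rfl, fun _ => rfl⟩ :
        (Fin aL × Fin aR) × (Fin cL × Fin cR) ≃ (Fin aR × Fin cL) × (Fin cR × Fin aL))
      (fun p => triangle ψ₁ ψ₂ ψ₃ (p.2.1, p.1, p.2.2)) (fun _ _ => rfl)
    rw [this, SE_pure _ (norm_unit _ h₃), SE_swap ψ₁, add_zero]
  have pAB : S_AB (triangle ψ₁ ψ₂ ψ₃) = SE ψ₂ + SE ψ₃ := by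
    unfold S_AB
    have := SE_prod3 (fun p : (Fin aR × Fin bL) × Unit => ψ₁ p.1) ψ₂
      (fun p : Fin aL × Fin cR => ψ₃ (p.2, p.1)) (norm_unit' _ h₁) h₂ (norm_swap _ h₃)
      (⟨fun x => (((x.1.2, x.2.1), x.2.2), x.1.1),
        fun y => ((y.2, y.1.1.1), (y.1.1.2, y.1.2)), fun _ => rfl, fun _ => rfl⟩ :
        (Fin aL × Fin aR) × (Fin bL × Fin bR) ≃ ((Fin aR × Fin bL) × Fin bR) × Fin aL)
      (⟨fun x => (((), x.1), x.2), fun y => (y.1.2, y.2), fun _ => rfl, fun _ => rfl⟩ :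
        Fin cL × Fin cR ≃ (Unit × Fin cL) × Fin cR)
      (fun p => triangle ψ₁ ψ₂ ψ₃ (p.1.1, p.1.2, p.2)) (fun _ _ => rfl)
    rw [this, SE_pure' _ h₁, SE_swap ψ₃, zero_add]
  refine ⟨cR, cL, fun p => triangle ψ₁ ψ₂ ψ₃ (p.1, p.2.1, (p.2.2.2, p.2.2.1)), ?_, ?_⟩
  · intro p q
    rw [Fintype.sum_prod_type, Finset.sum_comm]
  · have := SE_prod3 ψ₁ (fun p : Unit × (Fin bR × Fin cL) => ψ₂ p.2)
      (fun p : (Fin cR × Fin aL) × Unit => ψ₃ p.1) h₁ (norm_unit _ h₂) (norm_unit' _ h₃)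
      (⟨fun x => ((x.1.2, ()), (x.2, x.1.1)), fun y => ((y.2.2, y.1.1), y.2.1),
        fun _ => rfl, fun _ => rfl⟩ :
        (Fin aL × Fin aR) × Fin cR ≃ (Fin aR × Unit) × (Fin cR × Fin aL))
      (⟨fun x => ((x.1.1, (x.1.2, x.2)), ()),
        fun y => ((y.1.1, y.1.2.1), y.1.2.2), fun _ => rfl, fun _ => rfl⟩ :
        (Fin bL × Fin bR) × Fin cL ≃ (Fin bL × (Fin bR × Fin cL)) × Unit)
      (fun p => triangle ψ₁ ψ₂ ψ₃ (p.1.1, p.2.1, (p.2.2, p.1.2))) (fun _ _ => rfl)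
    rw [pA, pB, pAB, this, SE_pure _ (norm_unit _ h₂), SE_pure' _ h₃]
    ring
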